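/- Fix T > 0 and define u(t,x) = (2/π)·√(T−t−x²)·χ_{|x|≤√(T−t)} for 0 ≤ t < T. Then for every t ∈ [0,T) and every x with x² < T−t, the Hilbert transform Hu(t,·)(x) exists, the function x ↦ arctan( Hu(t,·)(x) / u(t,x) ) is differentiable at x, and u satisfies the nonlocal transport equation ∂_t u(t,x) + (1/π)·∂_x [ arctan( Hu(t,·)(x) / u(t,x) ) ] = 0. -/

import Mathlib

/-!
Write `a = T - t`. The identity
`√(a - y²) / (x - y) = (x + y) / √(a - y²) + (a - x²) / ((x - y) √(a - y²))`
integrates to an arcsine, a square root and a logarithm. The logarithmic singularity of this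
antiderivative is even about the pole, so it cancels in the principal value, and the Hilbert
transform of `√(a - y²)` at `x` is `x`. Hence
`arctan (Hu / u) = arctan (x / √(a - x²)) = arcsin (x / √a)`, whose `x`-derivative
`1 / √(a - x²)` is `-π ∂ₜu`.
-/

open MeasureTheory Real Filter Topology Set

/-- Chebyshev polynomial of the first kind, `T_k`, evaluated at a real number. -/
noncomputable def chebT (k : ℕ) (x : ℝ) : ℝ := (Polynomial.Chebyshev.T ℝ k).eval x

/-- Chebyshev polynomial of the second kind, `U_k`, evaluated at a real number. -/
noncomputable def chebU (k : ℕ) (x : ℝ) : ℝ := (Polynomial.Chebyshev.U ℝ k).eval x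

/-- `HasHilbertTransform f x L` means the Hilbert transform
`Hf(x) = (1/π) · p.v. ∫ f(y)/(x−y) dy` exists and equals `L`, the principal value
being the limit as `ε → 0⁺` of the integral over `{y : |x−y| > ε}`. -/
def HasHilbertTransform (f : ℝ → ℝ) (x L : ℝ) : Prop :=
  Tendsto (fun ε : ℝ => (1 / π) * ∫ y in {y : ℝ | ε < |x - y|}, f y / (x - y))
    (𝓝[>] 0) (𝓝 L)

namespace HasHilbertTransform

lemma const_mul {f : ℝ → ℝ} {x L : ℝ} (c : ℝ) (h : HasHilbertTransform f x L) :
    HasHilbertTransform (fun y => c * f y) x (c * L) := by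
  refine (Tendsto.const_mul c h).congr fun ε => ?_
  simp only [mul_div_assoc, integral_const_mul]
  ring

end HasHilbertTransform

section PrincipalValue

variable {f F : ℝ → ℝ} {a b c d x ε ℓ : ℝ}

lemma intervalIntegrable_div_sub (hcd : c ≤ d) (hsub : Icc c d ⊆ Icc a b \ {x})
    (hf : IntervalIntegrable f volume a b) :
    IntervalIntegrable (fun y => f y / (x - y)) volume c d := by
  rw [← uIcc_of_le hcd] at hsub
  simp only [div_eq_mul_inv]
  exact (hf.mono_set (hsub.trans (sdiff_subset.trans Icc_subset_uIcc))).mul_continuousOn <|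
    ContinuousOn.inv₀ (by fun_prop) fun y hy => sub_ne_zero.2 (Ne.symm (hsub hy).2)

lemma integral_div_sub_eq_sub_of_hasDerivAt (hcd : c ≤ d) (hsub : Icc c d ⊆ Icc a b \ {x})
    (hf : IntervalIntegrable f volume a b) (hF : ContinuousOn F (Icc a b \ {x}))
    (hF' : ∀ y ∈ Ioo a b \ {x}, HasDerivAt F (f y / (x - y)) y) :
    ∫ y in c..d, f y / (x - y) = F d - F c := by
  obtain ⟨hac, hdb⟩ := (Icc_subset_Icc_iff hcd).1 (hsub.trans sdiff_subset)
  exact intervalIntegral.integral_eq_sub_of_hasDerivAt_of_le hcd (hF.mono hsub)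
    (fun y hy => hF' y ⟨Ioo_subset_Ioo hac hdb hy, (hsub (Ioo_subset_Icc_self hy)).2⟩)
    (intervalIntegrable_div_sub hcd hsub hf)

lemma lt_abs_sub_inter_Icc (ha : a ≤ x + ε) (hb : x - ε ≤ b) :
    {y : ℝ | ε < |x - y|} ∩ Icc a b = Ico a (x - ε) ∪ Ioc (x + ε) b := by
  ext y
  simp only [mem_inter_iff, mem_ofPred_eq, mem_Icc, mem_union, mem_Ico, mem_Ioc, lt_abs]
  grind

lemma setIntegral_lt_abs_sub_div_sub (hε : 0 < ε) (ha : a ≤ x - ε) (hb : x + ε ≤ b)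
    (hsupp : Function.support f ⊆ Icc a b) (hf : IntervalIntegrable f volume a b)
    (hF : ContinuousOn F (Icc a b \ {x}))
    (hF' : ∀ y ∈ Ioo a b \ {x}, HasDerivAt F (f y / (x - y)) y) :
    ∫ y in {y : ℝ | ε < |x - y|}, f y / (x - y) = F b - F a + (F (x - ε) - F (x + ε)) := by
  have hleft : Icc a (x - ε) ⊆ Icc a b \ {x} := fun y hy =>
    ⟨⟨hy.1, by linarith [hy.2]⟩, ne_of_lt (by linarith [hy.2])⟩
  have hright : Icc (x + ε) b ⊆ Icc a b \ {x} := fun y hy =>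
    ⟨⟨by linarith [hy.1], hy.2⟩, ne_of_gt (by linarith [hy.1])⟩
  have hdisj : Disjoint (Ico a (x - ε)) (Ioc (x + ε) b) :=
    Set.disjoint_left.2 fun y hl hr => by linarith [hl.2, hr.1]
  have hmeas : MeasurableSet {y : ℝ | ε < |x - y|} := measurableSet_lt (by fun_prop) (by fun_prop)
  calc ∫ y in {y : ℝ | ε < |x - y|}, f y / (x - y)
      = ∫ y in {y : ℝ | ε < |x - y|} ∩ Icc a b, f y / (x - y) :=
        setIntegral_eq_of_subset_of_forall_sdiff_eq_zero hmeas inter_subset_left fun y hy => by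
          rw [Function.notMem_support.1 fun h => hy.2 ⟨hy.1, hsupp h⟩, zero_div]
    _ = (∫ y in a..x - ε, f y / (x - y)) + ∫ y in x + ε..b, f y / (x - y) := by
        rw [lt_abs_sub_inter_Icc (by linarith) (by linarith),
          setIntegral_union hdisj measurableSet_Ioc
            ((intervalIntegrable_iff_integrableOn_Ico_of_le ha).1
              (intervalIntegrable_div_sub ha hleft hf))
            ((intervalIntegrable_iff_integrableOn_Ioc_of_le hb).1
              (intervalIntegrable_div_sub hb hright hf)),
          integral_Ico_eq_integral_Ioc, intervalIntegral.integral_of_le ha,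
          intervalIntegral.integral_of_le hb]
    _ = F b - F a + (F (x - ε) - F (x + ε)) := by
        rw [integral_div_sub_eq_sub_of_hasDerivAt ha hleft hf hF hF',
          integral_div_sub_eq_sub_of_hasDerivAt hb hright hf hF hF']
        ring

lemma hasHilbertTransform_of_hasDerivAt (hx : x ∈ Ioo a b)
    (hsupp : Function.support f ⊆ Icc a b) (hf : IntervalIntegrable f volume a b)
    (hF : ContinuousOn F (Icc a b \ {x}))
    (hF' : ∀ y ∈ Ioo a b \ {x}, HasDerivAt F (f y / (x - y)) y)
    (hℓ : Tendsto (fun ε => F (x - ε) - F (x + ε)) (𝓝[>] 0) (𝓝 ℓ)) :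
    HasHilbertTransform f x (1 / π * (F b - F a + ℓ)) := by
  refine ((hℓ.const_add (F b - F a)).const_mul (1 / π)).congr' ?_
  have hsmall : ∀ᶠ ε : ℝ in 𝓝[>] 0, ε ∈ Ioo 0 (min (x - a) (b - x)) :=
    Ioo_mem_nhdsGT (lt_min (sub_pos.2 hx.1) (sub_pos.2 hx.2))
  filter_upwards [hsmall] with ε ⟨hε, hmin⟩
  obtain ⟨ha, hb⟩ := lt_min_iff.1 hmin
  rw [setIntegral_lt_abs_sub_div_sub hε (by linarith) (by linarith) hsupp hf hF hF']

end PrincipalValue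

lemma tendsto_sub_sub_add_of_continuousAt {E : Type*} [AddGroup E] [TopologicalSpace E]
    [ContinuousSub E] {g : ℝ → E} {x : ℝ} (hg : ContinuousAt g x) :
    Tendsto (fun ε => g (x - ε) - g (x + ε)) (𝓝[>] 0) (𝓝 0) := by
  have hl : ContinuousAt (fun ε => g (x - ε)) 0 :=
    ContinuousAt.comp (f := fun ε : ℝ => x - ε) (by simpa using hg) (by fun_prop)
  have hr : ContinuousAt (fun ε => g (x + ε)) 0 :=
    ContinuousAt.comp (f := fun ε : ℝ => x + ε) (by simpa using hg) (by fun_prop)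
  simpa using (Tendsto.sub hl hr).mono_left nhdsWithin_le_nhds

section Semicircle

variable {a x y : ℝ}

-- `Real.sqrt` is `0` at negative arguments.
lemma support_sqrt_sub_sq_subset (a : ℝ) :
    Function.support (fun y => √(a - y ^ 2)) ⊆ {y | |y| ≤ √a} := fun _ hy =>
  Real.abs_le_sqrt (sub_pos.1 (Real.sqrt_ne_zero'.1 hy)).le

lemma hasDerivAt_sqrt_sub_sq (hy : y ^ 2 < a) :
    HasDerivAt (fun y => √(a - y ^ 2)) (-y / √(a - y ^ 2)) y := by
  refine ((((hasDerivAt_id y).pow 2).const_sub a).sqrt (sub_pos.2 hy).ne').congr_deriv ?_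
  simp only [id]
  field_simp
  norm_num

lemma div_sqrt_mem_Ioo (hy : y ^ 2 < a) : y / √a ∈ Ioo (-1) 1 := by
  have ha : 0 < √a := Real.sqrt_pos.2 ((sq_nonneg y).trans_lt hy)
  obtain ⟨hl, hr⟩ := Real.sq_lt.1 hy
  exact ⟨by rwa [lt_div_iff₀ ha, neg_one_mul], by rwa [div_lt_one ha]⟩

lemma sqrt_mul_sqrt_one_sub_div_sqrt_sq (ha : 0 < a) :
    √a * √(1 - (y / √a) ^ 2) = √(a - y ^ 2) := by
  rw [← Real.sqrt_mul ha.le, div_pow, Real.sq_sqrt ha.le, mul_sub, mul_one,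
    mul_div_cancel₀ _ ha.ne']

lemma hasDerivAt_arcsin_div_sqrt (hy : y ^ 2 < a) :
    HasDerivAt (fun y => arcsin (y / √a)) (1 / √(a - y ^ 2)) y := by
  obtain ⟨hl, hr⟩ := div_sqrt_mem_Ioo hy
  refine ((Real.hasDerivAt_arcsin hl.ne' hr.ne).comp y
    ((hasDerivAt_id y).div_const √a)).congr_deriv ?_
  rw [← sqrt_mul_sqrt_one_sub_div_sqrt_sq ((sq_nonneg y).trans_lt hy)]
  ring

lemma arctan_div_sqrt_sub_sq (hy : y ^ 2 < a) :
    arctan (y / √(a - y ^ 2)) = arcsin (y / √a) := by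
  rw [Real.arcsin_eq_arctan (div_sqrt_mem_Ioo hy), div_div,
    sqrt_mul_sqrt_one_sub_div_sqrt_sq ((sq_nonneg y).trans_lt hy)]

lemma hasDerivAt_arctan_div_sqrt_sub_sq (hx : x ^ 2 < a) :
    HasDerivAt (fun y => arctan (y / √(a - y ^ 2))) (1 / √(a - x ^ 2)) x := by
  have hnear : ∀ᶠ y in 𝓝 x, y ^ 2 < a := (continuous_pow 2).continuousAt.eventually_lt_const hx
  exact (hasDerivAt_arcsin_div_sqrt hx).congr_of_eventuallyEq
    (hnear.mono fun _ => arctan_div_sqrt_sub_sq)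

lemma sub_mul_add_sqrt_mul_sqrt_pos (hx : x ^ 2 < a) (hy : y ^ 2 ≤ a) :
    0 < a - x * y + √(a - x ^ 2) * √(a - y ^ 2) := by
  have hsqrt : 0 ≤ √(a - x ^ 2) * √(a - y ^ 2) := by positivity
  nlinarith [sq_nonneg (x - y)]

lemma hasDerivAt_log_sub_log (hx : x ^ 2 < a) (hy : y ^ 2 < a) (hxy : x ≠ y) :
    HasDerivAt (fun y => log (a - x * y + √(a - x ^ 2) * √(a - y ^ 2)) - log (x - y))
      (√(a - x ^ 2) / (√(a - y ^ 2) * (x - y))) y := by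
  have hpos := sub_mul_add_sqrt_mul_sqrt_pos hx hy.le
  have hsub : x - y ≠ 0 := sub_ne_zero.2 hxy
  have hlin : HasDerivAt (fun y => a - x * y) (-x) y := by
    simpa using ((hasDerivAt_id y).const_mul x).const_sub a
  have harg : HasDerivAt (fun y => a - x * y + √(a - x ^ 2) * √(a - y ^ 2))
      (-x + √(a - x ^ 2) * (-y / √(a - y ^ 2))) y :=
    hlin.add ((hasDerivAt_sqrt_sub_sq hy).const_mul √(a - x ^ 2))
  refine ((harg.log hpos.ne').sub (((hasDerivAt_id y).const_sub x).log hsub)).congr_deriv ?_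
  have hs := Real.sqrt_pos.2 (sub_pos.2 hy)
  have hs_sq := Real.sq_sqrt (sub_pos.2 hy).le
  have hw_sq := Real.sq_sqrt (sub_pos.2 hx).le
  simp only [id]
  generalize √(a - y ^ 2) = s at *
  generalize √(a - x ^ 2) = w at *
  field_simp
  linear_combination w * hs_sq - s * hw_sq

/-- The part of an antiderivative of `y ↦ √(a - y²) / (x - y)` that is continuous across the pole;
the full antiderivative is obtained by subtracting `√(a - x²) * log (x - y)`. -/
noncomputable def semicircleRegularPart (a x y : ℝ) : ℝ :=
  x * arcsin (y / √a) - √(a - y ^ 2) +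
    √(a - x ^ 2) * log (a - x * y + √(a - x ^ 2) * √(a - y ^ 2))

lemma continuousOn_semicircleRegularPart (hx : x ^ 2 < a) :
    ContinuousOn (semicircleRegularPart a x) (Icc (-√a) √a) := by
  have ha : 0 ≤ a := (sq_nonneg x).trans hx.le
  have hlog : ContinuousOn (fun y => log (a - x * y + √(a - x ^ 2) * √(a - y ^ 2)))
      (Icc (-√a) √a) :=
    ContinuousOn.log (by fun_prop) fun y hy =>
      (sub_mul_add_sqrt_mul_sqrt_pos hx ((Real.sq_le ha).2 hy)).ne'
  unfold semicircleRegularPart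
  fun_prop

lemma hasDerivAt_semicircleRegularPart_sub_log (hx : x ^ 2 < a) (hy : y ^ 2 < a) (hxy : x ≠ y) :
    HasDerivAt (fun y => semicircleRegularPart a x y - √(a - x ^ 2) * log (x - y))
      (√(a - y ^ 2) / (x - y)) y := by
  have hsum := (((hasDerivAt_arcsin_div_sqrt hy).const_mul x).sub (hasDerivAt_sqrt_sub_sq hy)).add
    ((hasDerivAt_log_sub_log hx hy hxy).const_mul √(a - x ^ 2))
  have hsub : x - y ≠ 0 := sub_ne_zero.2 hxy
  have hs := Real.sqrt_pos.2 (sub_pos.2 hy)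
  have hs_sq := Real.sq_sqrt (sub_pos.2 hy).le
  have hw_sq := Real.sq_sqrt (sub_pos.2 hx).le
  refine (hsum.congr_deriv ?_).congr_of_eventuallyEq (.of_forall fun z => ?_)
  · field_simp
    linear_combination hw_sq - hs_sq
  · simp only [semicircleRegularPart, Pi.add_apply, Pi.sub_apply]
    ring

lemma semicircleRegularPart_sqrt_sub_log (hx : x ^ 2 < a) :
    semicircleRegularPart a x √a - √(a - x ^ 2) * log (x - √a) =
      π / 2 * x + √(a - x ^ 2) * log √a := by
  have ha : 0 < a := (sq_nonneg x).trans_lt hx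
  have hfactor : a - x * √a = √a * (√a - x) := by
    linear_combination -Real.sq_sqrt ha.le
  have hlog : log (a - x * √a) = log √a + log (x - √a) := by
    rw [hfactor, Real.log_mul (Real.sqrt_pos.2 ha).ne' (sub_pos.2 (Real.sq_lt.1 hx).2).ne',
      ← neg_sub x, Real.log_neg_eq_log]
  simp only [semicircleRegularPart, div_self (Real.sqrt_pos.2 ha).ne', Real.arcsin_one,
    Real.sq_sqrt ha.le, sub_self, Real.sqrt_zero, mul_zero, add_zero, hlog]
  ring

lemma semicircleRegularPart_neg_neg (a x y : ℝ) :
    semicircleRegularPart a (-x) (-y) = semicircleRegularPart a x y := by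
  simp only [semicircleRegularPart, neg_div, Real.arcsin_neg, neg_mul_neg, neg_sq]

lemma semicircleRegularPart_neg_sqrt_sub_log (hx : x ^ 2 < a) :
    semicircleRegularPart a x (-√a) - √(a - x ^ 2) * log (x - -√a) =
      -(π / 2 * x) + √(a - x ^ 2) * log √a := by
  have h := semicircleRegularPart_sqrt_sub_log (x := -x) (by rwa [neg_sq])
  rwa [← semicircleRegularPart_neg_neg, neg_neg, neg_sq, ← Real.log_neg_eq_log, neg_sub',
    neg_neg, mul_neg] at h

lemma hasHilbertTransform_sqrt_sub_sq (hx : x ^ 2 < a) :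
    HasHilbertTransform (fun y => √(a - y ^ 2)) x x := by
  have hx_mem : x ∈ Ioo (-√a) √a := Real.sq_lt.1 hx
  have hreg := continuousOn_semicircleRegularPart hx
  have hcont : ContinuousOn (fun y => semicircleRegularPart a x y - √(a - x ^ 2) * log (x - y))
      (Icc (-√a) √a \ {x}) :=
    (hreg.mono sdiff_subset).sub <| continuousOn_const.mul <|
      ContinuousOn.log (by fun_prop) fun y hy => sub_ne_zero.2 (Ne.symm hy.2)
  have hlim : Tendsto (fun ε =>
      (semicircleRegularPart a x (x - ε) - √(a - x ^ 2) * log (x - (x - ε))) -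
        (semicircleRegularPart a x (x + ε) - √(a - x ^ 2) * log (x - (x + ε))))
      (𝓝[>] 0) (𝓝 0) := by
    simpa only [sub_sub_cancel, sub_add_cancel_left, Real.log_neg_eq_log, sub_sub_sub_cancel_right]
      using tendsto_sub_sub_add_of_continuousAt (hreg.continuousAt (Icc_mem_nhds hx_mem.1 hx_mem.2))
  convert hasHilbertTransform_of_hasDerivAt hx_mem
    (fun y hy => abs_le.1 (support_sqrt_sub_sq_subset a hy))
    (Continuous.intervalIntegrable (by fun_prop) _ _) hcont
    (fun y hy => hasDerivAt_semicircleRegularPart_sub_log hx (Real.sq_lt.2 hy.1) (Ne.symm hy.2))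
    hlim using 1
  rw [semicircleRegularPart_sqrt_sub_log hx, semicircleRegularPart_neg_sqrt_sub_log hx]
  field_simp
  ring

end Semicircle

theorem semicircle_solves_transport_equation_general (T : ℝ) (u : ℝ → ℝ → ℝ)
    (hu : ∀ t x, u t x = Set.indicator {y : ℝ | |y| ≤ Real.sqrt (T - t)}
      (fun y => (2 / π) * Real.sqrt (T - t - y ^ 2)) x)
    (t x : ℝ) (hx : x ^ 2 < T - t) :
    ∃ Hu : ℝ → ℝ,
      (∀ y : ℝ, y ^ 2 < T - t → HasHilbertTransform (u t) y (Hu y)) ∧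
      DifferentiableAt ℝ (fun y => Real.arctan (Hu y / u t y)) x ∧
      ∃ ut : ℝ, HasDerivAt (fun s => u s x) ut t ∧
        ut + (1 / π) * deriv (fun y => Real.arctan (Hu y / u t y)) x = 0 := by
  obtain rfl : u = fun t x => 2 / π * √(T - t - x ^ 2) := by
    ext t x
    rw [hu, indicator_eq_self.2 ((Function.support_mul_subset_right _ _).trans
      (support_sqrt_sub_sq_subset (T - t)))]
  have harctan : HasDerivAt (fun y => arctan (2 / π * y / (2 / π * √(T - t - y ^ 2))))
      (1 / √(T - t - x ^ 2)) x := by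
    simpa only [mul_div_mul_left _ _ (show 2 / π ≠ 0 by positivity)] using
      hasDerivAt_arctan_div_sqrt_sub_sq hx
  have hdiff : HasDerivAt (fun s => T - s - x ^ 2) (-1) t :=
    ((hasDerivAt_id t).const_sub T).sub_const (x ^ 2)
  refine ⟨fun y => 2 / π * y, fun y hy => (hasHilbertTransform_sqrt_sub_sq hy).const_mul (2 / π),
    harctan.differentiableAt, _, (hdiff.sqrt (sub_pos.2 hx).ne').const_mul (2 / π), ?_⟩
  rw [harctan.deriv]
  field_simp
  ring

/-- The semicircle family `u(t,x) = (2/π)·√(T−t−x²)·χ_{|x|≤√(T−t)}` solves the nonlocal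
transport equation `u_t + (1/π)(arctan(Hu/u))_x = 0` on its support: for `t ∈ [0,T)` and
`x² < T−t`, the Hilbert transform `Hu(t,·)` exists on the support, `arctan(Hu/u)` is
differentiable in `x`, and the equation holds. -/
theorem semicircle_solves_transport_equation (T : ℝ) (hT : 0 < T)
    (u : ℝ → ℝ → ℝ)
    (hu : ∀ t x, u t x = Set.indicator {y : ℝ | |y| ≤ Real.sqrt (T - t)}
      (fun y => (2 / π) * Real.sqrt (T - t - y ^ 2)) x)
    (t : ℝ) (ht : t ∈ Set.Ico 0 T) (x : ℝ) (hx : x ^ 2 < T - t) :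
    ∃ Hu : ℝ → ℝ,
      (∀ y : ℝ, y ^ 2 < T - t → HasHilbertTransform (u t) y (Hu y)) ∧
      DifferentiableAt ℝ (fun y => Real.arctan (Hu y / u t y)) x ∧
      ∃ ut : ℝ, HasDerivAt (fun s => u s x) ut t ∧
        ut + (1 / π) * deriv (fun y => Real.arctan (Hu y / u t y)) x = 0 :=
  semicircle_solves_transport_equation_general T u hu t x hx
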